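/- CVaR_p is convex with respect to mixtures of distributions: let μ₁, μ₂ be Borel probability measures on ℝ such that the identity function is integrable with respect to both, let λ ∈ [0,1], let μ_λ := λ·μ₁ + (1−λ)·μ₂, and let p ∈ (0,1). Then CVaR_p(μ_λ) ≤ λ·CVaR_p(μ₁) + (1−λ)·CVaR_p(μ₂). In particular, the CVaR of a convex combination of two strategies can be strictly worse than the corresponding convex combination of their CVaRs, but never better. -/

import Mathlib

/-!
Write `(y)₊ = max y 0`. The function `c ↦ ∫ (c - x)₊ dμ` is convex, with one-sided derivatives
`μ(-∞, c)` and `μ(-∞, c]` at `c`. These enclose `p` at `v = VaR_p(μ)`, so `p` is a subgradient there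
and `v` maximises `c ↦ c - p⁻¹ ∫ (c - x)₊ dμ`. The maximum is `CVaR_p(μ)` (Rockafellar–Uryasev).
A maximum of functions affine in `μ` is convex in `μ`.
-/

open MeasureTheory Set

/-- The cumulative distribution function of a Borel measure on ℝ:
`F_μ(r) = μ((-∞, r])`. -/
noncomputable def mcdf (μ : Measure ℝ) (r : ℝ) : ℝ := (μ (Iic r)).toReal

/-- The value-at-risk `VaR_p(μ) = sSup {r | F_μ(r) ≤ p}`. -/
noncomputable def valueAtRisk (p : ℝ) (μ : Measure ℝ) : ℝ :=
  sSup {r : ℝ | mcdf μ r ≤ p}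

/-- The conditional value-at-risk: with `v = VaR_p(μ)`,
`CVaR_p(μ) = (1/p)·(∫_{(-∞,v)} x dμ + (p − μ((-∞,v)))·v)`. -/
noncomputable def cvar (p : ℝ) (μ : Measure ℝ) : ℝ :=
  (1 / p) * ((∫ x in Iio (valueAtRisk p μ), x ∂μ) +
    (p - (μ (Iio (valueAtRisk p μ))).toReal) * valueAtRisk p μ)

open Filter Topology

/-- The first-order lower partial moment `∫ (c - x)₊ dμ(x)`: the expected amount by which a
`μ`-distributed payoff falls short of the target `c`. -/
noncomputable def lowerPartialMoment (μ : Measure ℝ) (c : ℝ) : ℝ :=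
  ∫ x, max (c - x) 0 ∂μ

section OneSidedLimits

variable {α : Type*} [LinearOrder α] [TopologicalSpace α] [OrderTopology α] [DenselyOrdered α]
  [FirstCountableTopology α] [MeasurableSpace α] {μ : Measure α} [IsFiniteMeasure μ] {a : α} {p : ℝ}

lemma measureReal_Iio_le_of_forall_lt [NoMinOrder α]
    (h : ∀ r < a, μ.real (Iic r) ≤ p) : μ.real (Iio a) ≤ p := by
  obtain ⟨u, hu_mono, hu_lt, hu_lim⟩ := exists_seq_strictMono_tendsto a
  have hUnion : ⋃ n, Iic (u n) = Iio a :=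
    Subset.antisymm (iUnion_subset fun n => Iic_subset_Iio.2 (hu_lt n))
      fun _ hx => mem_iUnion.2 (hu_lim.eventually_const_le hx).exists
  have hμu : Tendsto (fun n => μ.real (Iic (u n))) atTop (𝓝 (μ.real (Iio a))) := by
    rw [← hUnion]
    exact (ENNReal.tendsto_toReal (measure_ne_top _ _)).comp
      (tendsto_measure_iUnion_atTop fun _ _ hmn => Iic_subset_Iic.2 (hu_mono.monotone hmn))
  exact le_of_tendsto' hμu fun n => h (u n) (hu_lt n)

lemma le_measureReal_Iic_of_forall_gt [NoMaxOrder α] [OpensMeasurableSpace α]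
    (h : ∀ r > a, p ≤ μ.real (Iic r)) : p ≤ μ.real (Iic a) := by
  have hInter : ⋂ r > a, Iic r = Iic a := by
    ext x
    simp only [mem_iInter, mem_Iic]
    exact forall_gt_imp_ge_iff_le_of_dense
  obtain ⟨b, hb⟩ := exists_gt a
  have hμ : Tendsto (fun r => μ.real (Iic r)) (𝓝[>] a) (𝓝 (μ.real (Iic a))) := by
    rw [← hInter]
    exact (ENNReal.tendsto_toReal (measure_ne_top _ _)).comp
      (tendsto_measure_biInter_gt (fun _ _ => measurableSet_Iic.nullMeasurableSet)
        (fun _ _ _ hrs => Iic_subset_Iic.2 hrs) ⟨b, hb, measure_ne_top _ _⟩)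
  exact ge_of_tendsto hμ (eventually_mem_nhdsWithin.mono h)

end OneSidedLimits

section Quantile

variable {μ : Measure ℝ} [IsFiniteMeasure μ] {p : ℝ}

lemma monotone_mcdf : Monotone (mcdf μ) := fun _ _ h =>
  measureReal_mono (Iic_subset_Iic.2 h)

lemma tendsto_mcdf_atBot : Tendsto (mcdf μ) atBot (𝓝 0) := by
  have hInter : ⋂ r : ℝ, Iic r = ∅ := iInter_Iic_eq_empty_iff.2 (by simp)
  have hμ : Tendsto (fun r => μ (Iic r)) atBot (𝓝 (μ (⋂ r : ℝ, Iic r))) :=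
    tendsto_measure_iInter_atBot (fun _ => measurableSet_Iic.nullMeasurableSet)
      (fun _ _ h => Iic_subset_Iic.2 h) ⟨0, measure_ne_top _ _⟩
  rw [hInter, measure_empty] at hμ
  exact (ENNReal.tendsto_toReal ENNReal.zero_ne_top).comp hμ

lemma tendsto_mcdf_atTop : Tendsto (mcdf μ) atTop (𝓝 (μ.real univ)) :=
  (ENNReal.tendsto_toReal (measure_ne_top _ _)).comp (tendsto_measure_Iic_atTop μ)

lemma measureReal_Iio_valueAtRisk_le (hp : 0 < p) :
    μ.real (Iio (valueAtRisk p μ)) ≤ p := by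
  have hne : {r : ℝ | mcdf μ r ≤ p}.Nonempty :=
    (tendsto_mcdf_atBot.eventually_le_const hp).exists
  refine measureReal_Iio_le_of_forall_lt fun r hr => ?_
  obtain ⟨s, hs, hrs⟩ := exists_lt_of_lt_csSup hne hr
  exact (monotone_mcdf hrs.le).trans hs

lemma le_measureReal_Iic_valueAtRisk (hp : p < μ.real univ) :
    p ≤ μ.real (Iic (valueAtRisk p μ)) := by
  have hbdd : BddAbove {r : ℝ | mcdf μ r ≤ p} := by
    obtain ⟨r, hr⟩ := (tendsto_mcdf_atTop.eventually_const_lt hp).exists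
    exact ⟨r, fun s hs => (monotone_mcdf.reflect_lt (lt_of_le_of_lt hs hr)).le⟩
  refine le_measureReal_Iic_of_forall_gt fun r hr => ?_
  exact (not_le.1 fun h => (le_csSup hbdd h).not_gt hr).le

end Quantile

section LowerPartialMoment

variable {μ : Measure ℝ}

lemma max_sub_zero_eq_indicator {G : Type*} [AddCommGroup G] [LinearOrder G]
    [IsOrderedAddMonoid G] (c : G) :
    (fun x => max (c - x) 0) = (Iio c).indicator (fun x => c - x) := by
  ext x
  rcases lt_or_ge x c with hx | hx
  · rw [indicator_of_mem (mem_Iio.2 hx), max_eq_left (sub_nonneg.2 hx.le)]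
  · rw [indicator_of_notMem (notMem_Iio.2 hx), max_eq_right (sub_nonpos.2 hx)]

lemma integrableOn_id_Iio [IsLocallyFiniteMeasure μ]
    (hint : IntegrableOn (fun x : ℝ => x) (Iic 0) μ) (c : ℝ) :
    IntegrableOn (fun x : ℝ => x) (Iio c) μ :=
  (hint.union continuous_id.integrableOn_Icc).mono_set fun x (hx : x < c) =>
    (le_total x 0).imp id fun h => ⟨h, hx.le⟩

lemma lowerPartialMoment_smul (a : ENNReal) (c : ℝ) :
    lowerPartialMoment (a • μ) c = a.toReal * lowerPartialMoment μ c :=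
  integral_smul_measure _ a

variable [IsFiniteMeasure μ]

lemma integrable_max_sub_zero (hint : IntegrableOn (fun x : ℝ => x) (Iic 0) μ) (c : ℝ) :
    Integrable (fun x : ℝ => max (c - x) 0) μ := by
  rw [max_sub_zero_eq_indicator, integrable_indicator_iff measurableSet_Iio]
  exact (integrable_const c).integrableOn.sub (integrableOn_id_Iio hint c)

lemma lowerPartialMoment_eq_sub_setIntegral
    (hint : IntegrableOn (fun x : ℝ => x) (Iic 0) μ) (c : ℝ) :
    lowerPartialMoment μ c = μ.real (Iio c) * c - ∫ x in Iio c, x ∂μ := by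
  rw [lowerPartialMoment, max_sub_zero_eq_indicator, integral_indicator measurableSet_Iio,
    integral_sub (integrable_const c).integrableOn (integrableOn_id_Iio hint c),
    setIntegral_const, smul_eq_mul]

-- With `s = Iio v` and `s = Iic v` this says that both one-sided derivatives of the convex function
-- `lowerPartialMoment μ` at `v` are subgradients.
lemma measureReal_mul_sub_le_lowerPartialMoment_sub
    (hint : IntegrableOn (fun x : ℝ => x) (Iic 0) μ) {s : Set ℝ} (hs : MeasurableSet s) {v : ℝ}
    (hvs : Iio v ⊆ s) (hsv : s ⊆ Iic v) (c : ℝ) :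
    μ.real s * (c - v) ≤ lowerPartialMoment μ c - lowerPartialMoment μ v := by
  have hpointwise (x : ℝ) :
      s.indicator (fun _ => c - v) x ≤ max (c - x) 0 - max (v - x) 0 := by
    by_cases hx : x ∈ s
    · have hxv : x ≤ v := hsv hx
      rw [indicator_of_mem hx, max_eq_left (sub_nonneg.2 hxv)]
      linarith [le_max_left (c - x) 0]
    · have hvx : v ≤ x := not_lt.1 fun h => hx (hvs h)
      rw [indicator_of_notMem hx, max_eq_right (sub_nonpos.2 hvx), sub_zero]
      exact le_max_right _ _
  have hc := integrable_max_sub_zero hint c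
  have hv := integrable_max_sub_zero hint v
  calc μ.real s * (c - v) = ∫ x, s.indicator (fun _ => c - v) x ∂μ := by
        rw [integral_indicator_const _ hs, smul_eq_mul]
    _ ≤ ∫ x, (max (c - x) 0 - max (v - x) 0) ∂μ :=
        integral_mono ((integrable_const _).indicator hs) (hc.sub hv) hpointwise
    _ = lowerPartialMoment μ c - lowerPartialMoment μ v := integral_sub hc hv

lemma mul_sub_le_lowerPartialMoment_sub
    (hint : IntegrableOn (fun x : ℝ => x) (Iic 0) μ) {p v : ℝ}
    (hIio : μ.real (Iio v) ≤ p) (hIic : p ≤ μ.real (Iic v)) (c : ℝ) :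
    p * (c - v) ≤ lowerPartialMoment μ c - lowerPartialMoment μ v := by
  rcases le_total v c with hvc | hcv
  · calc p * (c - v) ≤ μ.real (Iic v) * (c - v) :=
          mul_le_mul_of_nonneg_right hIic (sub_nonneg.2 hvc)
      _ ≤ _ := measureReal_mul_sub_le_lowerPartialMoment_sub hint measurableSet_Iic
          Iio_subset_Iic_self Subset.rfl c
  · calc p * (c - v) ≤ μ.real (Iio v) * (c - v) :=
          mul_le_mul_of_nonpos_right hIio (sub_nonpos.2 hcv)
      _ ≤ _ := measureReal_mul_sub_le_lowerPartialMoment_sub hint measurableSet_Iio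
          Subset.rfl Iio_subset_Iic_self c

lemma lowerPartialMoment_add {ν : Measure ℝ} [IsFiniteMeasure ν]
    (hμ : IntegrableOn (fun x : ℝ => x) (Iic 0) μ)
    (hν : IntegrableOn (fun x : ℝ => x) (Iic 0) ν) (c : ℝ) :
    lowerPartialMoment (μ + ν) c = lowerPartialMoment μ c + lowerPartialMoment ν c :=
  integral_add_measure (integrable_max_sub_zero hμ c) (integrable_max_sub_zero hν c)

end LowerPartialMoment

section ConditionalValueAtRisk

variable {μ : Measure ℝ} [IsFiniteMeasure μ] {p : ℝ}

lemma cvar_eq_sub_lowerPartialMoment_div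
    (hint : IntegrableOn (fun x : ℝ => x) (Iic 0) μ) (hp : p ≠ 0) :
    cvar p μ = valueAtRisk p μ - lowerPartialMoment μ (valueAtRisk p μ) / p := by
  rw [cvar, lowerPartialMoment_eq_sub_setIntegral hint, measureReal_def]
  field_simp
  ring

lemma sub_lowerPartialMoment_div_le_cvar
    (hint : IntegrableOn (fun x : ℝ => x) (Iic 0) μ) (hp : 0 < p) (hpμ : p < μ.real univ)
    (c : ℝ) : c - lowerPartialMoment μ c / p ≤ cvar p μ := by
  have hsubgradient := mul_sub_le_lowerPartialMoment_sub hint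
    (measureReal_Iio_valueAtRisk_le hp) (le_measureReal_Iic_valueAtRisk hpμ) c
  rw [mul_comm, ← le_div_iff₀ hp, sub_div] at hsubgradient
  rw [cvar_eq_sub_lowerPartialMoment_div hint hp.ne']
  linarith

end ConditionalValueAtRisk

lemma integrableOn_smul_measure {α E : Type*} [MeasurableSpace α] [NormedAddCommGroup E]
    {μ : Measure α} {f : α → E} {s : Set α} {a : ENNReal} (hf : IntegrableOn f s μ) (ha : a ≠ ⊤) :
    IntegrableOn f s (a • μ) := by
  rw [IntegrableOn, Measure.restrict_smul]
  exact hf.smul_measure ha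

theorem cvar_mixture_convex_general
    (μ₁ μ₂ : Measure ℝ) [IsFiniteMeasure μ₁] [IsFiniteMeasure μ₂]
    (hint₁ : IntegrableOn (fun x : ℝ => x) (Iic 0) μ₁)
    (hint₂ : IntegrableOn (fun x : ℝ => x) (Iic 0) μ₂)
    (l : ℝ) (hl : l ∈ Set.Icc (0 : ℝ) 1)
    (p : ℝ) (hp : 0 < p) (hp₁ : p < μ₁.real univ) (hp₂ : p < μ₂.real univ) :
    cvar p (ENNReal.ofReal l • μ₁ + ENNReal.ofReal (1 - l) • μ₂) ≤
      l * cvar p μ₁ + (1 - l) * cvar p μ₂ := by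
  have hl₁ : 0 ≤ l := hl.1
  have hl₂ : 0 ≤ 1 - l := sub_nonneg.2 hl.2
  have := μ₁.smul_finite (ENNReal.ofReal_ne_top (r := l))
  have := μ₂.smul_finite (ENNReal.ofReal_ne_top (r := 1 - l))
  have hint₁' := integrableOn_smul_measure hint₁ (ENNReal.ofReal_ne_top (r := l))
  have hint₂' := integrableOn_smul_measure hint₂ (ENNReal.ofReal_ne_top (r := 1 - l))
  rw [cvar_eq_sub_lowerPartialMoment_div (hint₁'.add_measure hint₂') hp.ne']
  set v := valueAtRisk p (ENNReal.ofReal l • μ₁ + ENNReal.ofReal (1 - l) • μ₂)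
  calc v - lowerPartialMoment (ENNReal.ofReal l • μ₁ + ENNReal.ofReal (1 - l) • μ₂) v / p
      = l * (v - lowerPartialMoment μ₁ v / p) + (1 - l) * (v - lowerPartialMoment μ₂ v / p) := by
        rw [lowerPartialMoment_add hint₁' hint₂', lowerPartialMoment_smul,
          lowerPartialMoment_smul, ENNReal.toReal_ofReal hl₁, ENNReal.toReal_ofReal hl₂]
        ring
    _ ≤ l * cvar p μ₁ + (1 - l) * cvar p μ₂ := by
        gcongr
        · exact sub_lowerPartialMoment_div_le_cvar hint₁ hp hp₁ v
        · exact sub_lowerPartialMoment_div_le_cvar hint₂ hp hp₂ v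

/-- `CVaR_p` is convex with respect to mixtures of distributions:
`CVaR_p(λ·μ₁ + (1−λ)·μ₂) ≤ λ·CVaR_p(μ₁) + (1−λ)·CVaR_p(μ₂)`. -/
theorem cvar_mixture_convex
    (μ₁ μ₂ : Measure ℝ) [IsProbabilityMeasure μ₁] [IsProbabilityMeasure μ₂]
    (hint₁ : Integrable (fun x : ℝ => x) μ₁)
    (hint₂ : Integrable (fun x : ℝ => x) μ₂)
    (l : ℝ) (hl : l ∈ Set.Icc (0 : ℝ) 1)
    (p : ℝ) (hp : p ∈ Set.Ioo (0 : ℝ) 1) :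
    cvar p (ENNReal.ofReal l • μ₁ + ENNReal.ofReal (1 - l) • μ₂) ≤
      l * cvar p μ₁ + (1 - l) * cvar p μ₂ :=
  cvar_mixture_convex_general μ₁ μ₂ hint₁.integrableOn hint₂.integrableOn l hl p hp.1
    (probReal_univ (μ := μ₁) ▸ hp.2) (probReal_univ (μ := μ₂) ▸ hp.2)
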